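/- Let F be an absolutely continuous distribution function with density f, let a_n > 0 and b_n ∈ ℝ, and let G be a continuous nondegenerate distribution function with density g. Suppose that F^n(a_n x + b_n) → G(x) as n → ∞ for every x ∈ ℝ, and that g_n(x) := n a_n f(a_n x + b_n) F^{n-1}(a_n x + b_n) converges to g(x) locally uniformly on {x : G(x) > 0}. Then for every fixed integer k ≥ 1 the density g_n^{(k)}(x) = [n!/((k-1)!(n-k)!)] a_n f(a_n x + b_n) F(a_n x + b_n)^{n-k} (1 − F(a_n x + b_n))^{k-1} converges, locally uniformly on {x : G(x) > 0}, to g^{(k)}(x) = g(x) (−log G(x))^{k-1}/(k−1)!. -/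

import Mathlib

open MeasureTheory Filter Real

lemma aux_F_nonneg (F f : ℝ → ℝ) (hf : ∀ x, 0 ≤ f x)
    (hF : ∀ x, F x = ∫ t in Set.Iic x, f t) (x : ℝ) : 0 ≤ F x := by
  rw [hF]; exact integral_nonneg hf

lemma aux_F_mono (F f : ℝ → ℝ) (hf : ∀ x, 0 ≤ f x)
    (hF : ∀ x, F x = ∫ t in Set.Iic x, f t) {z y r : ℝ} (hr : 0 < F r) (hzy : z ≤ y)
    (hyr : y ≤ r) : F z ≤ F y := by
  have hint : IntegrableOn f (Set.Iic r) := by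
    by_contra h
    rw [hF, integral_undef h] at hr
    exact lt_irrefl _ hr
  rw [hF, hF]
  exact setIntegral_mono_set (hint.mono_set (Set.Iic_subset_Iic.2 hyr))
    (Eventually.of_forall hf) (Set.Iic_subset_Iic.2 hzy).eventuallyLE

lemma aux_log_tendsto (u : ℕ → ℝ) (hu : ∀ n, 0 ≤ u n) (L : ℝ) (hL : 0 < L)
    (h : Tendsto (fun n => u n ^ n) atTop (nhds L)) :
    Tendsto u atTop (nhds 1) ∧
    Tendsto (fun n : ℕ => (n : ℝ) * (u n - 1)) atTop (nhds (Real.log L)) := by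
  have hpos : ∀ᶠ n in atTop, 0 < u n := by
    filter_upwards [h.eventually (lt_mem_nhds hL), eventually_ge_atTop 1] with n hn h1
    rcases (hu n).lt_or_eq with h2 | h2
    · exact h2
    · rw [← h2, zero_pow (by omega)] at hn; exact absurd hn (lt_irrefl _)
  have h1 : Tendsto (fun n : ℕ => (n : ℝ) * Real.log (u n)) atTop (nhds (Real.log L)) := by
    have := h.log hL.ne'
    simpa [Real.log_pow] using this
  have h2 : Tendsto (fun n : ℕ => Real.log (u n)) atTop (nhds 0) := by
    have := h1.mul (tendsto_inv_atTop_nhds_zero_nat (𝕜 := ℝ))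
    rw [mul_zero] at this
    refine this.congr' ?_
    filter_upwards [eventually_ge_atTop 1] with n hn
    have : (n : ℝ) ≠ 0 := by positivity
    field_simp
  have h3 : Tendsto u atTop (nhds 1) := by
    have := (Real.continuous_exp.tendsto 0).comp h2
    rw [Real.exp_zero] at this
    refine this.congr' ?_
    filter_upwards [hpos] with n hn
    exact Real.exp_log hn
  refine ⟨h3, ?_⟩
  have h4 : Tendsto (fun n : ℕ => ((n : ℝ) * Real.log (u n)) * Real.log (u n)) atTop (nhds 0) := by
    simpa using h1.mul h2
  have h5 : Tendsto (fun n : ℕ => (n : ℝ) * (u n - 1) - (n : ℝ) * Real.log (u n)) atTop (nhds 0) := by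
    refine squeeze_zero_norm' ?_ h4
    have : ∀ᶠ n in atTop, |Real.log (u n)| ≤ 1 := by
      have := h2.abs
      rw [abs_zero] at this
      exact this.eventually (ge_mem_nhds one_pos)
    filter_upwards [this, hpos] with n hn hp
    have := Real.abs_exp_sub_one_sub_id_le hn
    rw [Real.exp_log hp] at this
    rw [← mul_sub, norm_mul, Real.norm_natCast, Real.norm_eq_abs]
    have h0 : (0:ℝ) ≤ n := by positivity
    have e : u n - 1 - Real.log (u n) = u n - 1 - Real.log (u n) := rfl
    nlinarith [mul_le_mul_of_nonneg_left this h0]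
  simpa using h5.add h1

/-- comparison of the two affine normalizations -/
lemma aux_compare (F f G : ℝ → ℝ) (a b : ℕ → ℝ) (hf : ∀ x, 0 ≤ f x)
    (hF : ∀ x, F x = ∫ t in Set.Iic x, f t)
    (hconv : ∀ x : ℝ, Tendsto (fun n : ℕ => F (a n * x + b n) ^ n) atTop (nhds (G x)))
    (s : ℝ) (hs : 0 < s) (p q : ℝ) (hp : 0 < G p) (hq : 0 < G q) :
    (Real.log (G p) < Real.log (G q) / s → ∀ᶠ n : ℕ in atTop,
      a n * p + b n < a ⌈s * n⌉₊ * q + b ⌈s * n⌉₊) ∧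
    (Real.log (G q) / s < Real.log (G p) → ∀ᶠ n : ℕ in atTop,
      a ⌈s * n⌉₊ * q + b ⌈s * n⌉₊ < a n * p + b n) := by
  have hm : Tendsto (fun n : ℕ => ⌈s * n⌉₊) atTop atTop :=
    tendsto_nat_ceil_atTop.comp (tendsto_natCast_atTop_atTop.const_mul_atTop hs)
  have hr : Tendsto (fun n : ℕ => ((⌈s * n⌉₊ : ℕ) : ℝ) / n) atTop (nhds s) :=
    (tendsto_nat_ceil_mul_div_atTop hs.le).comp tendsto_natCast_atTop_atTop
  obtain ⟨p1, p2⟩ := aux_log_tendsto (fun n => F (a n * p + b n))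
    (fun n => aux_F_nonneg F f hf hF _) _ hp (hconv p)
  obtain ⟨q1, q2⟩ := aux_log_tendsto (fun n => F (a n * q + b n))
    (fun n => aux_F_nonneg F f hf hF _) _ hq (hconv q)
  have q1' := q1.comp hm
  have q2' : Tendsto (fun n : ℕ => (n : ℝ) * (F (a ⌈s * n⌉₊ * q + b ⌈s * n⌉₊) - 1)) atTop
      (nhds (Real.log (G q) / s)) := by
    refine ((q2.comp hm).div hr hs.ne').congr' ?_
    filter_upwards [hm.eventually (eventually_ge_atTop 1), eventually_ge_atTop 1] with n h1 h2
    have : (n : ℝ) ≠ 0 := by positivity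
    have : ((⌈s * n⌉₊ : ℕ) : ℝ) ≠ 0 := by positivity
    simp only [Pi.div_apply, Function.comp]
    field_simp
  have p3 := p1.eventually (lt_mem_nhds (zero_lt_one))
  have q3 := q1'.eventually (lt_mem_nhds (zero_lt_one))
  constructor
  · intro h
    filter_upwards [p2.eventually_lt q2' h, p3, q3] with n h1 h2 h3
    by_contra! hc
    have := aux_F_mono F f hf hF h2 hc le_rfl
    have h0 : (0:ℝ) ≤ n := by positivity
    nlinarith
  · intro h
    filter_upwards [q2'.eventually_lt p2 h, p3, q3] with n h1 h2 h3
    by_contra! hc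
    have := aux_F_mono F f hf hF h3 hc le_rfl
    have h0 : (0:ℝ) ≤ n := by positivity
    nlinarith

/-- joint convergence -/
lemma aux_joint (F f G : ℝ → ℝ) (a b : ℕ → ℝ) (ha : ∀ n, 0 < a n) (hf : ∀ x, 0 ≤ f x)
    (hF : ∀ x, F x = ∫ t in Set.Iic x, f t) (hG : Continuous G)
    (hconv : ∀ x : ℝ, Tendsto (fun n : ℕ => F (a n * x + b n) ^ n) atTop (nhds (G x)))
    (x₀ : ℝ) (h0 : 0 < G x₀) :
    Tendsto (fun y : ℕ × ℝ => (y.1 : ℝ) * (F (a y.1 * y.2 + b y.1) - 1))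
      (atTop ×ˢ nhds x₀) (nhds (Real.log (G x₀))) := by
  have hc : ContinuousAt (fun x => Real.log (G x)) x₀ := hG.continuousAt.log h0.ne'
  have hGp : ∀ᶠ x in nhds x₀, 0 < G x := hG.continuousAt.eventually (lt_mem_nhds h0)
  rw [tendsto_order]
  constructor
  · intro c hcl
    obtain ⟨δ, hδ, hb⟩ := Metric.eventually_nhds_iff.1
      (hGp.and (hc.eventually (lt_mem_nhds hcl)))
    have hl := hb (y := x₀ - δ / 2) (by rw [Real.dist_eq, abs_lt]; constructor <;> linarith)
    have hr := hb (y := x₀ + δ / 2) (by rw [Real.dist_eq, abs_lt]; constructor <;> linarith)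
    obtain ⟨-, l2⟩ := aux_log_tendsto _ (fun n => aux_F_nonneg F f hf hF _) _ hl.1 (hconv _)
    obtain ⟨r1, -⟩ := aux_log_tendsto _ (fun n => aux_F_nonneg F f hf hF _) _ hr.1 (hconv _)
    have hx : ∀ᶠ x in nhds x₀, x ∈ Set.Ioo (x₀ - δ / 2) (x₀ + δ / 2) :=
      Ioo_mem_nhds (by linarith) (by linarith)
    filter_upwards [((l2.eventually (lt_mem_nhds hl.2)).and
      (r1.eventually (lt_mem_nhds one_pos))).prod_mk hx] with y hy
    obtain ⟨⟨h1, h2⟩, h3, h4⟩ := hy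
    have hay := (ha y.1).le
    have := aux_F_mono F f hf hF (z := a y.1 * (x₀ - δ / 2) + b y.1) (y := a y.1 * y.2 + b y.1) h2
      (by gcongr) (by gcongr)
    refine h1.trans_le ?_
    gcongr
  · intro c hcl
    obtain ⟨δ, hδ, hb⟩ := Metric.eventually_nhds_iff.1
      (hGp.and (hc.eventually (gt_mem_nhds hcl)))
    have hr := hb (y := x₀ + δ / 2) (by rw [Real.dist_eq, abs_lt]; constructor <;> linarith)
    obtain ⟨r1, r2⟩ := aux_log_tendsto _ (fun n => aux_F_nonneg F f hf hF _) _ hr.1 (hconv _)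
    have hx : ∀ᶠ x in nhds x₀, x ∈ Set.Ioo (x₀ - δ / 2) (x₀ + δ / 2) :=
      Ioo_mem_nhds (by linarith) (by linarith)
    filter_upwards [((r2.eventually (gt_mem_nhds hr.2)).and
      (r1.eventually (lt_mem_nhds one_pos))).prod_mk hx] with y hy
    obtain ⟨⟨h1, h2⟩, h3, h4⟩ := hy
    have hay := (ha y.1).le
    have := aux_F_mono F f hf hF (z := a y.1 * y.2 + b y.1) (r := a y.1 * (x₀ + δ / 2) + b y.1) h2
      (by gcongr) le_rfl
    refine lt_of_le_of_lt ?_ h1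
    gcongr

lemma aux_strict_right (G : ℝ → ℝ) (hmono : Monotone G) {x y d : ℝ} (hd : HasDerivAt G d x)
    (h0 : d ≠ 0) (hxy : x < y) : G x < G y := by
  refine lt_of_le_of_ne (hmono hxy.le) fun he => h0 ?_
  have h1 : HasDerivWithinAt G 0 (Set.Icc x y) x := by
    refine (hasDerivWithinAt_const x (Set.Icc x y) (G x)).congr ?_ rfl
    intro z hz
    exact le_antisymm ((hmono hz.2).trans he.ge) (hmono hz.1)
  exact (uniqueDiffOn_Icc hxy x (Set.left_mem_Icc.2 hxy.le)).eq_deriv _ hd.hasDerivWithinAt h1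

lemma aux_strict_left (G : ℝ → ℝ) (hmono : Monotone G) {x y d : ℝ} (hd : HasDerivAt G d y)
    (h0 : d ≠ 0) (hxy : x < y) : G x < G y := by
  refine lt_of_le_of_ne (hmono hxy.le) fun he => h0 ?_
  have h1 : HasDerivWithinAt G 0 (Set.Icc x y) y := by
    refine (hasDerivWithinAt_const y (Set.Icc x y) (G y)).congr ?_ rfl
    intro z hz
    exact le_antisymm (hmono hz.2) (he.ge.trans (hmono hz.1))
  exact (uniqueDiffOn_Icc hxy y (Set.right_mem_Icc.2 hxy.le)).eq_deriv _ hd.hasDerivWithinAt h1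

/-- scaling inequality for the derivative of `log G` -/
lemma aux_scale (G g : ℝ → ℝ) (a b : ℕ → ℝ) (ha : ∀ n, 0 < a n) (hG : Continuous G)
    (hmono : Monotone G) (hg : ∀ x, HasDerivAt G (g x) x)
    (s : ℝ)
    (hcmp : ∀ p q : ℝ, 0 < G p → 0 < G q →
    (Real.log (G p) < Real.log (G q) / s → ∀ᶠ n : ℕ in atTop,
      a n * p + b n < a ⌈s * n⌉₊ * q + b ⌈s * n⌉₊) ∧
    (Real.log (G q) / s < Real.log (G p) → ∀ᶠ n : ℕ in atTop,
      a ⌈s * n⌉₊ * q + b ⌈s * n⌉₊ < a n * p + b n))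
    (x₁ x' α₀ : ℝ) (h1 : 0 < G x₁) (h' : 0 < G x') (hα₀ : 0 < α₀)
    (heq : Real.log (G x₁) / s = Real.log (G x'))
    (hstrict : ∀ ε > 0, 0 < G (x' - ε) → Real.log (G (x' - ε)) < Real.log (G x₁) / s)
    (hα : ∀ α < α₀, ∀ᶠ n : ℕ in atTop, a n * α ≤ a ⌈s * n⌉₊) :
    α₀ * (g x' / G x') ≤ g x₁ / G x₁ / s := by
  have key : ∀ η > 0, Real.log (G (x' + α₀ * η)) ≤ Real.log (G (x₁ + η)) / s := by
    intro η hη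
    by_contra! hlt
    have hGp : 0 < G (x' + α₀ * η) := h'.trans_le (hmono (by nlinarith))
    have hG1 : 0 < G (x₁ + η) := h1.trans_le (hmono (by linarith))
    have c1 : ContinuousAt (fun ε : ℝ => Real.log (G (x' - ε + (α₀ - ε) * η))) 0 := by
      apply ContinuousAt.log
      · fun_prop
      · simpa using hGp.ne'
    have c2 : ContinuousAt (fun ε : ℝ => G (x' - ε + (α₀ - ε) * η)) 0 := by fun_prop
    have c3 : ContinuousAt (fun ε : ℝ => G (x' - ε)) 0 := by fun_prop
    have e1 := c1.eventually (lt_mem_nhds (a := Real.log (G (x₁ + η)) / s) (by simpa using hlt))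
    have e2 := c2.eventually (lt_mem_nhds (a := 0) (by simpa using hGp))
    have e3 := c3.eventually (lt_mem_nhds (a := 0) (by simpa using h'))
    have e : ∀ᶠ ε in nhdsWithin (0:ℝ) (Set.Ioi 0), _ :=
      ((e1.and (e2.and e3)).filter_mono nhdsWithin_le_nhds).and self_mem_nhdsWithin
    obtain ⟨ε, ⟨q1, q2, q3⟩, q4⟩ := e.exists
    have q4 : 0 < ε := q4
    have r1 := (hcmp (x' - ε) x₁ q3 h1).1 (hstrict ε q4 q3)
    have r2 := (hcmp _ (x₁ + η) q2 hG1).2 q1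
    obtain ⟨n, n1, n2, n3⟩ := (r1.and (r2.and (hα (α₀ - ε) (by linarith)))).exists
    nlinarith [mul_le_mul_of_nonneg_right n3 hη.le]
  have d1 : HasDerivAt (fun η => Real.log (G (x₁ + η)) / s) (g x₁ / G x₁ / s) 0 := by
    have : HasDerivAt (fun η => G (x₁ + η)) (g x₁) 0 := by
      have := (hg (x₁ + 0)).comp_const_add x₁ 0
      simpa using this
    have := (this.log (by simpa using h1.ne')).div_const s
    simpa using this
  have d2 : HasDerivAt (fun η => Real.log (G (x' + α₀ * η))) (α₀ * (g x' / G x')) 0 := by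
    have i : HasDerivAt (fun η : ℝ => x' + α₀ * η) α₀ 0 := by
      simpa using ((hasDerivAt_id (0:ℝ)).const_mul α₀).const_add x'
    have : HasDerivAt (fun η => G (x' + α₀ * η)) (g x' * α₀) 0 := by
      have h := hg (x' + α₀ * 0)
      have := h.comp (0:ℝ) i
      simpa [Function.comp_def] using this
    have := this.log (by simpa using h'.ne')
    convert this using 1
    simp; ring
  have d3 := (d1.sub d2).tendsto_slope_zero_right
  rw [← sub_nonneg]
  refine ge_of_tendsto d3 ?_
  filter_upwards [self_mem_nhdsWithin] with η hη
  have hη : 0 < η := hη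
  have := key η hη
  simp only [Pi.sub_apply, zero_add, add_zero, mul_zero, heq, sub_self, sub_zero, smul_eq_mul]
  have := inv_pos.2 hη
  apply mul_nonneg this.le
  linarith

lemma aux_scaleA (G g : ℝ → ℝ) (a b : ℕ → ℝ) (ha : ∀ n, 0 < a n) (hG : Continuous G)
    (hmono : Monotone G) (hg : ∀ x, HasDerivAt G (g x) x)
    (s : ℝ)
    (hcmp : ∀ p q : ℝ, 0 < G p → 0 < G q →
    (Real.log (G p) < Real.log (G q) / s → ∀ᶠ n : ℕ in atTop,
      a n * p + b n < a ⌈s * n⌉₊ * q + b ⌈s * n⌉₊) ∧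
    (Real.log (G q) / s < Real.log (G p) → ∀ᶠ n : ℕ in atTop,
      a ⌈s * n⌉₊ * q + b ⌈s * n⌉₊ < a n * p + b n))
    (x₁ x' x₂ y₂ : ℝ) (h1 : 0 < G x₁) (h' : 0 < G x') (h2 : 0 < G x₂) (hy : 0 < G y₂)
    (h21 : x₂ < x₁) (hy' : y₂ < x') (hne : g x' ≠ 0)
    (heq : Real.log (G x₁) / s = Real.log (G x'))
    (hs2 : ∀ ε > 0, Real.log (G x₂) / s < Real.log (G (y₂ + ε))) :
    (x' - y₂) / (x₁ - x₂) * (g x' / G x') ≤ g x₁ / G x₁ / s := by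
  have hx : 0 < x₁ - x₂ := by linarith
  have hstrict : ∀ ε > 0, 0 < G (x' - ε) → Real.log (G (x' - ε)) < Real.log (G x₁) / s := by
    intro ε hε hp
    rw [heq]
    exact Real.log_lt_log hp (aux_strict_left G hmono (hg x') hne (by linarith))
  refine aux_scale G g a b ha hG hmono hg s hcmp x₁ x' _ h1 h' (div_pos (by linarith) hx)
    heq hstrict ?_
  intro α hα
  rw [lt_div_iff₀ hx] at hα
  have c3 : ContinuousAt (fun ε : ℝ => G (x' - ε)) 0 := by fun_prop
  have e3 := c3.eventually (lt_mem_nhds (a := 0) (by simpa using h'))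
  have e4 : ∀ᶠ ε in nhds (0:ℝ), ε < (x' - y₂ - α * (x₁ - x₂)) / 2 := gt_mem_nhds (by linarith)
  have e : ∀ᶠ ε in nhdsWithin (0:ℝ) (Set.Ioi 0), _ :=
      ((e3.and e4).filter_mono nhdsWithin_le_nhds).and self_mem_nhdsWithin
  obtain ⟨ε, ⟨q1, q2⟩, q4⟩ := e.exists
  have q4 : 0 < ε := q4
  filter_upwards [(hcmp (x' - ε) x₁ q1 h1).1 (hstrict ε q4 q1),
    (hcmp (y₂ + ε) x₂ (hy.trans_le (hmono (by linarith))) h2).2 (hs2 ε q4)] with n n1 n2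
  have := ha n
  have : a n * (α * (x₁ - x₂)) ≤ a n * (x' - y₂ - 2 * ε) := by gcongr; linarith
  refine le_of_mul_le_mul_right ?_ hx
  nlinarith

lemma aux_scaleB (G g : ℝ → ℝ) (a b : ℕ → ℝ) (ha : ∀ n, 0 < a n) (hG : Continuous G)
    (hmono : Monotone G) (hg : ∀ x, HasDerivAt G (g x) x)
    (s : ℝ)
    (hcmp : ∀ p q : ℝ, 0 < G p → 0 < G q →
    (Real.log (G p) < Real.log (G q) / s → ∀ᶠ n : ℕ in atTop,
      a n * p + b n < a ⌈s * n⌉₊ * q + b ⌈s * n⌉₊) ∧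
    (Real.log (G q) / s < Real.log (G p) → ∀ᶠ n : ℕ in atTop,
      a ⌈s * n⌉₊ * q + b ⌈s * n⌉₊ < a n * p + b n))
    (x₁ x' x₂ y₂ : ℝ) (h1 : 0 < G x₁) (h' : 0 < G x') (h2 : 0 < G x₂) (hy : 0 < G y₂)
    (h21 : x₁ < x₂) (hy' : x' < y₂) (hne : g x' ≠ 0)
    (heq : Real.log (G x₁) / s = Real.log (G x'))
    (hs2 : ∀ ε > 0, 0 < G (y₂ - ε) → Real.log (G (y₂ - ε)) < Real.log (G x₂) / s) :
    (y₂ - x') / (x₂ - x₁) * (g x' / G x') ≤ g x₁ / G x₁ / s := by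
  have hx : 0 < x₂ - x₁ := by linarith
  have hstrict : ∀ ε > 0, 0 < G (x' - ε) → Real.log (G (x' - ε)) < Real.log (G x₁) / s := by
    intro ε hε hp
    rw [heq]
    exact Real.log_lt_log hp (aux_strict_left G hmono (hg x') hne (by linarith))
  refine aux_scale G g a b ha hG hmono hg s hcmp x₁ x' _ h1 h' (div_pos (by linarith) hx)
    heq hstrict ?_
  intro α hα
  rw [lt_div_iff₀ hx] at hα
  have c3 : ContinuousAt (fun ε : ℝ => G (y₂ - ε)) 0 := by fun_prop
  have e3 := c3.eventually (lt_mem_nhds (a := 0) (by simpa using hy))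
  have e4 : ∀ᶠ ε in nhds (0:ℝ), ε < (y₂ - x' - α * (x₂ - x₁)) / 2 := gt_mem_nhds (by linarith)
  have e : ∀ᶠ ε in nhdsWithin (0:ℝ) (Set.Ioi 0), _ :=
      ((e3.and e4).filter_mono nhdsWithin_le_nhds).and self_mem_nhdsWithin
  obtain ⟨ε, ⟨q1, q2⟩, q4⟩ := e.exists
  have q4 : 0 < ε := q4
  have hs1 : Real.log (G x₁) / s < Real.log (G (x' + ε)) := by
    rw [heq]
    exact Real.log_lt_log h' (aux_strict_right G hmono (hg x') hne (by linarith))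
  filter_upwards [(hcmp (x' + ε) x₁ (h'.trans_le (hmono (by linarith))) h1).2 hs1,
    (hcmp (y₂ - ε) x₂ q1 h2).1 (hs2 ε q4 q1)] with n n1 n2
  have := ha n
  have : a n * (α * (x₂ - x₁)) ≤ a n * (y₂ - x' - 2 * ε) := by gcongr; linarith
  refine le_of_mul_le_mul_right ?_ hx
  nlinarith

lemma aux_bdd (G g : ℝ → ℝ) (a b : ℕ → ℝ) (ha : ∀ n, 0 < a n) (hG : Continuous G)
    (hmono : Monotone G) (hg : ∀ x, HasDerivAt G (g x) x)
    (hcmp : ∀ s : ℝ, 0 < s → ∀ p q : ℝ, 0 < G p → 0 < G q →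
    (Real.log (G p) < Real.log (G q) / s → ∀ᶠ n : ℕ in atTop,
      a n * p + b n < a ⌈s * n⌉₊ * q + b ⌈s * n⌉₊) ∧
    (Real.log (G q) / s < Real.log (G p) → ∀ᶠ n : ℕ in atTop,
      a ⌈s * n⌉₊ * q + b ⌈s * n⌉₊ < a n * p + b n))
    (x₀ : ℝ) (h0 : 0 < G x₀) : ∃ M : ℝ, ∀ᶠ x in nhds x₀, g x / G x ≤ M := by
  have hg0 : ∀ x, 0 ≤ g x := fun x => by
    rw [← (hg x).deriv]; exact hmono.deriv_nonneg
  have hGp : ∀ᶠ x in nhds x₀, 0 < G x := hG.continuousAt.eventually (lt_mem_nhds h0)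
  have hφd : HasDerivAt (fun x => Real.log (G x)) (g x₀ / G x₀) x₀ := (hg x₀).log h0.ne'
  have hc : ContinuousAt (fun x => Real.log (G x)) x₀ := hφd.continuousAt
  by_cases hz : Real.log (G x₀) = 0
  · have hG1 : G x₀ = 1 := Real.eq_one_of_pos_of_log_eq_zero h0 hz
    obtain ⟨K, hK⟩ := hφd.isBigO_sub.bound
    simp only [hz, sub_zero, Real.norm_eq_abs] at hK
    have left : ∃ M : ℝ, ∀ᶠ x in nhds x₀, x < x₀ → g x / G x ≤ M := by
      by_cases hzz : ∃ z < x₀, G z = 1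
      · obtain ⟨z, hz1, hz2⟩ := hzz
        refine ⟨0, ?_⟩
        filter_upwards [lt_mem_nhds hz1] with x hx1 hx2
        have : g x = 0 := by
          by_contra hne
          have := aux_strict_right G hmono (hg x) hne hx2
          have := hmono hx1.le
          linarith
        simp [this]
      · by_cases hall : ∀ x < x₀, 0 < G x → g x = 0
        · refine ⟨0, ?_⟩
          filter_upwards [hGp] with x hx1 hx2
          simp [hall x hx2 hx1]
        · push Not at hall hzz
          obtain ⟨x₁, hx1, hx1p, hne⟩ := hall
          have hneg : ∀ y, 0 < G y → y < x₀ → Real.log (G y) < 0 := by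
            intro y hy1 hy2
            exact Real.log_neg hy1 (lt_of_le_of_ne (hG1 ▸ hmono hy2.le) (hzz y hy2))
          have hφ1 := hneg x₁ hx1p hx1
          refine ⟨(x₀ - x₁) * (g x₁ / G x₁) * K / (-Real.log (G x₁)), ?_⟩
          filter_upwards [hGp, hK] with x hx hKx hlt
          have hφ := hneg x hx hlt
          rw [le_div_iff₀ (by linarith)]
          have hK2 : -Real.log (G x) ≤ K * (x₀ - x) := by
            rw [abs_of_neg hφ, abs_of_neg (by linarith)] at hKx
            linarith
          have hg1 : 0 ≤ g x₁ / G x₁ := div_nonneg (hg0 _) hx1p.le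
          have hgx : 0 ≤ g x / G x := div_nonneg (hg0 _) hx.le
          have hd : 0 < x₀ - x := by linarith
          have hd1 : 0 < x₀ - x₁ := by linarith
          by_cases hgz : g x = 0
          · have hK0 : 0 ≤ K := by
              by_contra! hk
              nlinarith
            rw [hgz, zero_div, zero_mul]
            positivity
          · have := aux_scaleB G g a b ha hG hmono hg (Real.log (G x₁) / Real.log (G x))
              (hcmp _ (div_pos_of_neg_of_neg hφ1 hφ)) x₁ x x₀ x₀ hx1p hx h0 h0 hx1 hlt hgz
              (by field_simp [hφ1.ne, hφ.ne])
              (fun ε hε hp => by rw [hz, zero_div]; exact hneg _ hp (by linarith))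
            have e : g x₁ / G x₁ / (Real.log (G x₁) / Real.log (G x)) =
              g x₁ / G x₁ * (-Real.log (G x)) / (-Real.log (G x₁)) := by
              field_simp [hφ1.ne, hφ.ne]
            rw [e, le_div_iff₀ (by linarith), div_mul_eq_mul_div, div_mul_eq_mul_div,
              div_le_iff₀ hd1] at this
            have t := mul_le_mul_of_nonneg_left hK2 (mul_nonneg hg1 hd1.le)
            refine le_of_mul_le_mul_left ?_ hd
            nlinarith
    have right : ∃ M : ℝ, ∀ᶠ x in nhds x₀, x₀ < x → g x / G x ≤ M := by
      by_cases hzz : ∃ z > x₀, G z = 1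
      · obtain ⟨z, hz1, hz2⟩ := hzz
        refine ⟨0, ?_⟩
        filter_upwards [gt_mem_nhds hz1] with x hx1 hx2
        have : g x = 0 := by
          by_contra hne
          have := aux_strict_left G hmono (hg x) hne hx2
          have := hmono hx1.le
          linarith
        simp [this]
      · by_cases hall : ∀ x > x₀, 0 < G x → g x = 0
        · refine ⟨0, ?_⟩
          filter_upwards [hGp] with x hx1 hx2
          simp [hall x hx2 hx1]
        · push Not at hall hzz
          obtain ⟨x₁, hx1, hx1p, hne⟩ := hall
          have hpos : ∀ y, x₀ < y → 0 < Real.log (G y) := by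
            intro y hy2
            exact Real.log_pos (lt_of_le_of_ne (hG1 ▸ hmono hy2.le) (hzz y hy2).symm)
          have hφ1 := hpos x₁ hx1
          refine ⟨(x₁ - x₀) * (g x₁ / G x₁) * K / Real.log (G x₁), ?_⟩
          filter_upwards [hGp, hK] with x hx hKx hlt
          have hφ := hpos x hlt
          rw [le_div_iff₀ (by linarith)]
          have hK2 : Real.log (G x) ≤ K * (x - x₀) := by
            rwa [abs_of_pos hφ, abs_of_pos (by linarith)] at hKx
          have hg1 : 0 ≤ g x₁ / G x₁ := div_nonneg (hg0 _) hx1p.le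
          have hgx : 0 ≤ g x / G x := div_nonneg (hg0 _) hx.le
          have hd : 0 < x - x₀ := by linarith
          have hd1 : 0 < x₁ - x₀ := by linarith
          by_cases hgz : g x = 0
          · have hK0 : 0 ≤ K := by
              by_contra! hk
              nlinarith
            rw [hgz, zero_div, zero_mul]
            positivity
          · have := aux_scaleA G g a b ha hG hmono hg (Real.log (G x₁) / Real.log (G x))
              (hcmp _ (div_pos hφ1 hφ)) x₁ x x₀ x₀ hx1p hx h0 h0 hx1 hlt hgz
              (by field_simp [hφ1.ne', hφ.ne'])
              (fun ε hε => by rw [hz, zero_div]; exact hpos _ (by linarith))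
            have e : g x₁ / G x₁ / (Real.log (G x₁) / Real.log (G x)) =
              g x₁ / G x₁ * (Real.log (G x)) / (Real.log (G x₁)) := by
              field_simp [hφ1.ne', hφ.ne']
            rw [e, le_div_iff₀ (by linarith), div_mul_eq_mul_div, div_mul_eq_mul_div,
              div_le_iff₀ hd1] at this
            have t := mul_le_mul_of_nonneg_left hK2 (mul_nonneg hg1 hd1.le)
            refine le_of_mul_le_mul_left ?_ hd
            nlinarith
    obtain ⟨M1, h1⟩ := left
    obtain ⟨M2, h2⟩ := right
    refine ⟨max (max M1 M2) (g x₀ / G x₀), ?_⟩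
    filter_upwards [h1, h2] with x k1 k2
    rcases lt_trichotomy x x₀ with h | h | h
    · exact (k1 h).trans ((le_max_left _ _).trans (le_max_left _ _))
    · rw [h]; exact le_max_right _ _
    · exact (k2 h).trans ((le_max_right _ _).trans (le_max_left _ _))
  · have hsgn : ∀ᶠ x in nhds x₀, 0 < Real.log (G x) * Real.log (G x₀) := by
      have : ContinuousAt (fun x => Real.log (G x) * Real.log (G x₀)) x₀ :=
        hc.mul continuousAt_const
      exact this.eventually (lt_mem_nhds (mul_self_pos.2 hz))
    by_cases hall : ∀ᶠ x in nhds x₀, g x = 0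
    · refine ⟨0, ?_⟩
      filter_upwards [hall] with x hx
      simp [hx]
    obtain ⟨x₁, hne, hx1p, hx1s⟩ :=
      ((not_eventually.1 hall).and_eventually (hGp.and hsgn)).exists
    have hx2 : ∃ x₂ < x₁, 0 < G x₂ := by
      have : ∀ᶠ x in nhdsWithin x₁ (Set.Iio x₁), 0 < G x :=
        (hG.continuousAt.eventually (lt_mem_nhds hx1p)).filter_mono nhdsWithin_le_nhds
      obtain ⟨x, k1, k2⟩ := (this.and self_mem_nhdsWithin).exists
      exact ⟨x, k2, k1⟩
    obtain ⟨x₂, h21, hx2p⟩ := hx2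
    have hlt : Real.log (G x₂) < Real.log (G x₁) :=
      Real.log_lt_log hx2p (aux_strict_left G hmono (hg x₁) hne h21)
    have hφ1 : Real.log (G x₁) ≠ 0 := fun h => by rw [h, zero_mul] at hx1s; exact lt_irrefl _ hx1s
    have hratio : 0 < Real.log (G x₀) / Real.log (G x₁) := by
      rw [div_eq_mul_inv, ← mul_pos_iff_of_pos_right (mul_self_pos.2 hφ1)]
      have : Real.log (G x₀) * (Real.log (G x₁))⁻¹ * (Real.log (G x₁) * Real.log (G x₁))
        = Real.log (G x₁) * Real.log (G x₀) := by field_simp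
      rw [this]; exact hx1s
    set ρ := Real.log (G x₂) / Real.log (G x₁) with hρ
    have hρlt : ρ * Real.log (G x₀) < Real.log (G x₀) := by
      have := mul_lt_mul_of_pos_right hlt hratio
      have e1 : Real.log (G x₁) * (Real.log (G x₀) / Real.log (G x₁)) = Real.log (G x₀) := by
        field_simp
      have e2 : Real.log (G x₂) * (Real.log (G x₀) / Real.log (G x₁)) = ρ * Real.log (G x₀) := by
        rw [hρ]; ring
      rwa [e1, e2] at this
    obtain ⟨c, hc1, hc2⟩ := exists_between hρlt
    have e1 := hc.eventually (lt_mem_nhds hc2)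
    have e2 := (hc.const_mul ρ).eventually (gt_mem_nhds hc1)
    have e3 := hc.abs.eventually (gt_mem_nhds (lt_add_one |Real.log (G x₀)|))
    obtain ⟨δ, hδ, hb⟩ := Metric.eventually_nhds_iff.1
      (hGp.and (hsgn.and (e1.and (e2.and e3))))
    refine ⟨(x₁ - x₂) * (g x₁ / G x₁) * ((|Real.log (G x₀)| + 1) / |Real.log (G x₁)|) / (δ / 3), ?_⟩
    filter_upwards [Metric.ball_mem_nhds x₀ (show 0 < δ / 3 by linarith)] with x hx
    rw [Metric.mem_ball, Real.dist_eq, abs_lt] at hx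
    obtain ⟨p1, p2, -, p4, p5⟩ := hb (y := x) (by rw [Real.dist_eq, abs_lt]; constructor <;> linarith)
    obtain ⟨r1, -, r3, -, -⟩ := hb (y := x₀ - 2 * δ / 3)
      (by rw [Real.dist_eq, abs_lt]; constructor <;> linarith)
    have hg1 : 0 ≤ g x₁ / G x₁ := div_nonneg (hg0 _) hx1p.le
    have hgx : 0 ≤ g x / G x := div_nonneg (hg0 _) p1.le
    have hd1 : 0 < x₁ - x₂ := by linarith
    by_cases hgz : g x = 0
    · rw [hgz, zero_div]; positivity
    have hφ : Real.log (G x) ≠ 0 := fun h => by rw [h, zero_mul] at p2; exact lt_irrefl _ p2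
    have hs : 0 < Real.log (G x₁) / Real.log (G x) := by
      have : Real.log (G x₁) / Real.log (G x) = (Real.log (G x₁) * Real.log (G x₀)) /
        (Real.log (G x) * Real.log (G x₀)) := by field_simp
      rw [this]; exact div_pos hx1s p2
    have := aux_scaleA G g a b ha hG hmono hg (Real.log (G x₁) / Real.log (G x))
      (hcmp _ hs) x₁ x x₂ (x₀ - 2 * δ / 3) hx1p p1 hx2p r1 h21 (by linarith) hgz
      (by field_simp)
      (fun ε hε => by
        have e : Real.log (G x₂) / (Real.log (G x₁) / Real.log (G x)) = ρ * Real.log (G x) := by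
          rw [hρ]; field_simp
        rw [e]
        refine (p4.trans r3).trans_le (Real.log_le_log r1 (hmono (by linarith))))
    have e : g x₁ / G x₁ / (Real.log (G x₁) / Real.log (G x)) =
        g x₁ / G x₁ * (|Real.log (G x)| / |Real.log (G x₁)|) := by
      rw [← abs_div, ← inv_div (Real.log (G x₁)), abs_inv, abs_of_pos hs, div_eq_mul_inv]
    have hle : |Real.log (G x)| / |Real.log (G x₁)| ≤
      (|Real.log (G x₀)| + 1) / |Real.log (G x₁)| := by gcongr
    have t := mul_le_mul_of_nonneg_left hle hg1
    rw [e, div_mul_eq_mul_div, div_le_iff₀ hd1] at this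
    rw [le_div_iff₀ (by linarith)]
    have t2 := mul_le_mul_of_nonneg_left t hd1.le
    have t3 : δ / 3 * (g x / G x) ≤ (x - (x₀ - 2 * δ / 3)) * (g x / G x) := by
      apply mul_le_mul_of_nonneg_right _ hgx; linarith
    nlinarith

/-- local uniform convergence of the density of the normalized k-th
largest order statistic to `g(x)(-log G(x))^{k-1}/(k-1)!` on `{x : G x > 0}`. -/
theorem kth_extreme_density_locally_uniform_convergence
    (F f G g : ℝ → ℝ) (a b : ℕ → ℝ) (k : ℕ) (hk : 1 ≤ k)
    (ha : ∀ n, 0 < a n)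
    -- F is an absolutely continuous distribution function with density f
    (hf_nonneg : ∀ x, 0 ≤ f x)
    (hF : ∀ x, F x = ∫ t in Set.Iic x, f t)
    -- G is a continuous nondegenerate distribution function with density g
    (hG_cont : Continuous G)
    (hG_nondeg : ∃ x, 0 < G x ∧ G x < 1)
    (hG_mono : Monotone G)
    (hg : ∀ x, HasDerivAt G (g x) x)
    -- F^n(a_n x + b_n) → G(x) for every x
    (hconv : ∀ x : ℝ, Tendsto (fun n : ℕ => F (a n * x + b n) ^ n) atTop (nhds (G x)))
    -- g_n → g locally uniformly on {x : G x > 0}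
    (hgn : TendstoLocallyUniformlyOn
      (fun (n : ℕ) (x : ℝ) => n * a n * f (a n * x + b n) * F (a n * x + b n) ^ (n - 1))
      g atTop {x | 0 < G x}) :
    TendstoLocallyUniformlyOn
      (fun (n : ℕ) (x : ℝ) =>
        ((n.factorial : ℝ) / ((k - 1).factorial * (n - k).factorial)) *
          a n * f (a n * x + b n) * F (a n * x + b n) ^ (n - k) *
          (1 - F (a n * x + b n)) ^ (k - 1))
      (fun x => g x * (- Real.log (G x)) ^ (k - 1) / (k - 1).factorial)
      atTop {x | 0 < G x} := by
  have hU : IsOpen {x | 0 < G x} := isOpen_lt continuous_const hG_cont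
  obtain ⟨j, rfl⟩ : ∃ j, k = j + 1 := ⟨k - 1, by omega⟩
  rw [tendstoLocallyUniformlyOn_iff_forall_tendsto] at hgn ⊢
  intro x₀ hx₀
  have h0 : 0 < G x₀ := hx₀
  have hgn0 := hgn x₀ hx₀
  rw [hU.nhdsWithin_eq hx₀] at hgn0 ⊢
  rw [Metric.uniformity_eq_comap_nhds_zero, tendsto_comap_iff] at hgn0 ⊢
  have h1 : Tendsto (fun y : ℕ × ℝ => g y.2 - y.1 * a y.1 * f (a y.1 * y.2 + b y.1) *
      F (a y.1 * y.2 + b y.1) ^ (y.1 - 1)) (atTop ×ˢ nhds x₀) (nhds 0) := by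
    rw [tendsto_zero_iff_abs_tendsto_zero]
    exact hgn0
  suffices h2 : Tendsto (fun y : ℕ × ℝ => g y.2 * (- Real.log (G y.2)) ^ j / j.factorial -
      ((y.1.factorial : ℝ) / (j.factorial * (y.1 - (j + 1)).factorial)) *
          a y.1 * f (a y.1 * y.2 + b y.1) * F (a y.1 * y.2 + b y.1) ^ (y.1 - (j + 1)) *
          (1 - F (a y.1 * y.2 + b y.1)) ^ j) (atTop ×ˢ nhds x₀) (nhds 0) by
    rw [tendsto_zero_iff_abs_tendsto_zero] at h2
    exact h2
  obtain ⟨M, hM⟩ := aux_bdd G g a b ha hG_cont hG_mono hg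
    (fun s hs p q hp hq => aux_compare F f G a b hf_nonneg hF hconv s hs p q hp hq) x₀ h0
  have hg0 : ∀ x, 0 ≤ g x := fun x => by
    rw [← (hg x).deriv]; exact hG_mono.deriv_nonneg
  have hbd : ∃ C : ℝ, ∀ᶠ x in nhds x₀, ‖g x‖ ≤ C := by
    refine ⟨|M| * (G x₀ + 1), ?_⟩
    filter_upwards [hM, hG_cont.continuousAt.eventually (lt_mem_nhds h0),
      hG_cont.continuousAt.eventually (gt_mem_nhds (lt_add_one (G x₀)))] with x k1 k2 k3
    rw [Real.norm_of_nonneg (hg0 x)]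
    rw [div_le_iff₀ k2] at k1
    calc g x ≤ M * G x := k1
      _ ≤ |M| * G x := by gcongr; exact le_abs_self M
      _ ≤ _ := by gcongr
  obtain ⟨C, hC⟩ := hbd
  have hn1 : Tendsto (fun y : ℕ × ℝ => y.1) (atTop ×ˢ nhds x₀) atTop := tendsto_fst
  have hx1 : Tendsto (fun y : ℕ × ℝ => y.2) (atTop ×ˢ nhds x₀) (nhds x₀) := tendsto_snd
  have hj := aux_joint F f G a b ha hf_nonneg hF hG_cont hconv x₀ h0
  have hF1 : Tendsto (fun y : ℕ × ℝ => F (a y.1 * y.2 + b y.1)) (atTop ×ˢ nhds x₀) (nhds 1) := by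
    have := (hj.mul ((tendsto_inv_atTop_nhds_zero_nat (𝕜 := ℝ)).comp hn1)).add_const 1
    rw [mul_zero, zero_add] at this
    refine this.congr' ?_
    filter_upwards [hn1.eventually (eventually_ge_atTop 1)] with y hy
    have : (y.1 : ℝ) ≠ 0 := by positivity
    simp only [Function.comp]
    field_simp
    ring
  have hfac : Tendsto (fun n : ℕ => (n.descFactorial (j + 1) : ℝ) / (n : ℝ) ^ (j + 1))
      atTop (nhds 1) := by
    refine (Asymptotics.isEquivalent_iff_tendsto_one ?_).1 (isEquivalent_descFactorial (j + 1))
    filter_upwards [eventually_ge_atTop 1] with n hn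
    positivity
  have hq : Tendsto (fun y : ℕ × ℝ => - Real.log (G y.2)) (atTop ×ˢ nhds x₀)
      (nhds (- Real.log (G x₀))) :=
    (((hG_cont.tendsto x₀).comp hx1).log h0.ne').neg
  have hq' : Tendsto (fun y : ℕ × ℝ => (- Real.log (G y.2)) ^ j / (j.factorial : ℝ))
      (atTop ×ˢ nhds x₀) (nhds ((- Real.log (G x₀)) ^ j / (j.factorial : ℝ))) :=
    (hq.pow j).div_const _
  have hqn : Tendsto (fun y : ℕ × ℝ => (y.1.descFactorial (j + 1) : ℝ) / (y.1 : ℝ) ^ (j + 1) *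
      ((-((y.1 : ℝ) * (F (a y.1 * y.2 + b y.1) - 1))) ^ j / (j.factorial : ℝ) /
        F (a y.1 * y.2 + b y.1) ^ j))
      (atTop ×ˢ nhds x₀) (nhds ((- Real.log (G x₀)) ^ j / (j.factorial : ℝ))) := by
    have := (hfac.comp hn1).mul (((hj.neg.pow j).div_const (j.factorial : ℝ)).div (hF1.pow j)
      (by simp))
    simpa [Function.comp_def] using this
  have hdiff := hq'.sub hqn
  rw [sub_self] at hdiff
  have hgC : IsBoundedUnder (· ≤ ·) (atTop ×ˢ nhds x₀) (norm ∘ fun y : ℕ × ℝ => g y.2) :=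
    ⟨C, by rw [eventually_map]; exact hx1.eventually hC⟩
  have t1 := isBoundedUnder_le_mul_tendsto_zero hgC hdiff
  have t2 := t1.add (h1.mul hqn)
  rw [zero_mul, add_zero] at t2
  refine t2.congr' ?_
  filter_upwards [hn1.eventually (eventually_ge_atTop (j + 1)),
    hF1.eventually (lt_mem_nhds one_pos)] with y hy hFy
  obtain ⟨m, hm⟩ : ∃ m, y.1 = m + (j + 1) := ⟨y.1 - (j + 1), by omega⟩
  have hn0 : (y.1 : ℝ) ≠ 0 := by
    have : 1 ≤ y.1 := by omega
    positivity
  have hdf : (y.1.factorial : ℝ) = (y.1 - (j + 1)).factorial * y.1.descFactorial (j + 1) := by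
    exact_mod_cast (Nat.factorial_mul_descFactorial hy).symm
  have hpow : F (a y.1 * y.2 + b y.1) ^ (y.1 - 1) =
      F (a y.1 * y.2 + b y.1) ^ (y.1 - (j + 1)) * F (a y.1 * y.2 + b y.1) ^ j := by
    rw [← pow_add]; congr 1; omega
  have hneg : (-((y.1 : ℝ) * (F (a y.1 * y.2 + b y.1) - 1))) ^ j =
      (y.1 : ℝ) ^ j * (1 - F (a y.1 * y.2 + b y.1)) ^ j := by
    rw [← mul_pow]; ring
  have hj0 : (j.factorial : ℝ) ≠ 0 := by positivity
  have hm0 : ((y.1 - (j + 1)).factorial : ℝ) ≠ 0 := by positivity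
  rw [hdf, hpow, hneg]
  generalize F (a y.1 * y.2 + b y.1) = u at *
  have hu : u ^ j ≠ 0 := pow_ne_zero _ hFy.ne'
  have hnj : (y.1 : ℝ) ^ j ≠ 0 := pow_ne_zero _ hn0
  rw [pow_succ (y.1 : ℝ) j]
  field_simp
  ring
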